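/- In the conditioned bunkbed percolation model \mathcal{E}_T on G_1 with T=\{2,5,8\} at p=1/2, conditioned additionally on the post set being exactly \{2,5,8\}, the conditional probability of P_+ strictly exceeds that of P_-, where P_\varepsilon = \{1^- \to 3^\varepsilon, 1^- \to 5^- or 5^+\} \cap \{1^- \not\to 3^{-\varepsilon}\}. -/

import Mathlib

/-- Edges of the bunkbed graph of a directed graph on vertex type `V`:
`horiz u v ε` is the copy of the directed edge `(u,v)` in bunk `ε`
(`false` = lower bunk `-`, `true` = upper bunk `+`); `vert w` is the
bidirected vertical edge `(w⁻, w⁺)`. -/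
inductive BBEdge (V : Type) : Type
  | horiz : V → V → Bool → BBEdge V
  | vert  : V → BBEdge V
deriving DecidableEq

/-- The `F`-mirroring map on single edges: vertical edges are fixed, a horizontal
edge whose shadow lies in `F` is sent to its mirrored copy in the other bunk, and
horizontal edges with shadow outside `F` are fixed. -/
def mir {V : Type} [DecidableEq V] (F : Finset (V × V)) : BBEdge V → BBEdge V
  | .horiz u v ε => if (u, v) ∈ F then .horiz u v (!ε) else .horiz u v ε
  | .vert w => .vert w

/-- The `F`-mirrored subgraph `M(H,F)`. -/
def M {V : Type} [DecidableEq V] (H : Finset (BBEdge V)) (F : Finset (V × V)) :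
    Finset (BBEdge V) :=
  H.image (mir F)
/-- The edge set of the bunkbed graph of the directed graph with vertex set `Vs`
and edge set `E`: the vertical edges at all vertices together with the two
horizontal copies of each edge. -/
def bbEdges {V : Type} [DecidableEq V] (Vs : Finset V) (E : Finset (V × V)) :
    Finset (BBEdge V) :=
  Vs.image BBEdge.vert ∪ E.image (fun p => BBEdge.horiz p.1 p.2 false) ∪
    E.image (fun p => BBEdge.horiz p.1 p.2 true)
/-- Probability of the event `A` under uniform (`p = 1/2`) Bernoulli bond
percolation on the edge set `s`: a subgraph is a uniformly random subset of `s`. -/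
noncomputable def Pr {V : Type} [DecidableEq V] (s : Finset (BBEdge V))
    (A : Finset (BBEdge V) → Prop) : ℚ :=
  letI := Classical.decPred A
  ((s.powerset.filter A).card : ℚ) / (s.powerset.card : ℚ)

/-- Conditional probability of `A` given `C` under uniform percolation on `s`. -/
noncomputable def CondPr {V : Type} [DecidableEq V] (s : Finset (BBEdge V))
    (C A : Finset (BBEdge V) → Prop) : ℚ :=
  Pr s (fun H => A H ∧ C H) / Pr s C

/-- One step of directed traversal in a subgraph `H` of the bunkbed graph:
horizontal edges are used in their direction within a bunk, and vertical edges
may be traversed in both directions. Vertices of the bunkbed graph are pairs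
`(w, ε)` with `ε : Bool` the bunk label (`false` = `-`, `true` = `+`). -/
def bbStep {V : Type} [DecidableEq V] (H : Finset (BBEdge V)) :
    V × Bool → V × Bool → Prop := fun a b =>
  (a.1 = b.1 ∧ a.2 ≠ b.2 ∧ BBEdge.vert a.1 ∈ H) ∨
    (a.2 = b.2 ∧ BBEdge.horiz a.1 b.1 a.2 ∈ H)

/-- Directed reachability `x → y` in a subgraph of the bunkbed graph. -/
def bbReach {V : Type} [DecidableEq V] (H : Finset (BBEdge V))
    (a b : V × Bool) : Prop :=
  Relation.ReflTransGen (bbStep H) a b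
/-- The conditioning event of the conditioned bunkbed model `𝓔_T`: all vertices
of `T` are posts. -/
def postCond {V : Type} [DecidableEq V] (T : Finset V)
    (H : Finset (BBEdge V)) : Prop :=
  ∀ t ∈ T, BBEdge.vert t ∈ H

/-- The edge set of the graph `G₁` of Przybyłowski's counterexample, on
vertices `1,…,9`. -/
def E1 : Finset (ℕ × ℕ) :=
  {(1,2), (1,4), (2,3), (3,4), (4,5), (3,7), (5,6), (6,7), (6,9), (7,8), (8,9)}

/-- The vertex set of `G₁`. -/
def V1 : Finset ℕ := {1, 2, 3, 4, 5, 6, 7, 8, 9}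

/-- The conditioning set `T = {2,5,8}`. -/
def T1 : Finset ℕ := {2, 5, 8}

/-- The edge set of the bunkbed graph of `G₁`. -/
def s1 : Finset (BBEdge ℕ) := bbEdges V1 E1

/-- The event `F` that the post set is exactly `{2,5,8}`. -/
def exactPosts (H : Finset (BBEdge ℕ)) : Prop :=
  ∀ w : ℕ, BBEdge.vert w ∈ H ↔ w ∈ T1

/-- The event `P_ε = {1⁻ → 3^ε, 5^±} ∩ {1⁻ ↛ 3^{-ε}}` (`ε : Bool`, `false` = `-`,
`true` = `+`). -/
def Pev (ε : Bool) (H : Finset (BBEdge ℕ)) : Prop :=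
  bbReach H (1, false) (3, ε) ∧
    (bbReach H (1, false) (5, false) ∨ bbReach H (1, false) (5, true)) ∧
    ¬ bbReach H (1, false) (3, !ε)

/-!
When the posts are `2, 5, 8`, the event `P_ε` only sees the edges over `1, …, 5`: it says that
`1⁻ → 2⁻` is open, that `2 → 3` is open in bunk `ε` only, and that `5` is reached either through
`1⁻ → 4⁻ → 5⁻` or through `3^ε → 4^ε → 5^ε`. Mirroring `2 → 3` alone when `1⁻ → 4⁻` is open, and
the whole path `2 → 3 → 4 → 5` otherwise, injects `P₋` into `P₊`: for `ε = -` and `1⁻ → 4⁻` open,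
the second route to `5` already implies the first. For `ε = +` it does not, and a configuration
using only the second route with `1⁻ → 4⁻` open is missed by the injection.
-/

section Probability

variable {V : Type} [DecidableEq V] {s : Finset (BBEdge V)} {A B C : Finset (BBEdge V) → Prop}

theorem pr_nonneg : 0 ≤ Pr s A :=
  div_nonneg (Nat.cast_nonneg _) (Nat.cast_nonneg _)

theorem pr_le_pr (h : ∀ H ⊆ s, A H → B H) : Pr s A ≤ Pr s B := by
  unfold Pr
  gcongr with H hH
  exact h H (Finset.mem_powerset.1 hH)

theorem pr_lt_pr_of_injOn {f : Finset (BBEdge V) → Finset (BBEdge V)}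
    (hmaps : Set.MapsTo f {H | H ⊆ s ∧ A H} {H | H ⊆ s ∧ B H})
    (hinj : Set.InjOn f {H | H ⊆ s ∧ A H})
    (hsurj : ¬ Set.SurjOn f {H | H ⊆ s ∧ A H} {H | H ⊆ s ∧ B H}) :
    Pr s A < Pr s B := by
  classical
  have coe_filter (D : Finset (BBEdge V) → Prop) :
      (s.powerset.filter D : Set (Finset (BBEdge V))) = {H | H ⊆ s ∧ D H} := by
    ext H
    simp
  rw [← coe_filter A, ← coe_filter B] at hmaps hsurj
  rw [← coe_filter A] at hinj
  have hcard : (s.powerset.filter A).card < (s.powerset.filter B).card := by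
    by_contra! hle
    exact hsurj (Finset.surjOn_of_injOn_of_card_le f hmaps hinj hle)
  have hpos : (0 : ℚ) < s.powerset.card := by
    exact_mod_cast Finset.card_pos.2 s.powerset_nonempty
  unfold Pr
  refine div_lt_div_of_pos_right ?_ hpos
  convert (Nat.cast_lt (α := ℚ)).2 hcard

theorem condPr_lt_condPr (h : Pr s (fun H => A H ∧ C H) < Pr s (fun H => B H ∧ C H)) :
    CondPr s C A < CondPr s C B := by
  have hC : 0 < Pr s C :=
    pr_nonneg.trans_lt (h.trans_le (pr_le_pr fun _ _ hH => hH.2))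
  exact div_lt_div_of_pos_right h hC

end Probability

section Mirror

variable {V : Type} [DecidableEq V] {Vs : Finset V} {E F : Finset (V × V)}
  {H : Finset (BBEdge V)} {e : BBEdge V} {u v w : V} {ε : Bool}

theorem mir_involutive : Function.Involutive (mir F) := by
  rintro (⟨u, v, ε⟩ | w)
  · by_cases h : (u, v) ∈ F <;> simp [mir, h]
  · rfl

theorem mem_M : e ∈ M H F ↔ mir F e ∈ H := by
  refine ⟨fun h => ?_, fun h => Finset.mem_image.2 ⟨_, h, mir_involutive e⟩⟩
  obtain ⟨e', he', rfl⟩ := Finset.mem_image.1 h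
  rwa [mir_involutive e']

theorem horiz_mem_M :
    .horiz u v ε ∈ M H F ↔ .horiz u v (if (u, v) ∈ F then !ε else ε) ∈ H := by
  rw [mem_M, mir]
  split_ifs <;> rfl

theorem vert_mem_M : .vert w ∈ M H F ↔ .vert w ∈ H := by
  rw [mem_M, mir]

theorem M_M : M (M H F) F = H := by
  ext e
  rw [mem_M, mem_M, mir_involutive e]

theorem M_involutive_of_forall_eq {S : Finset (BBEdge V) → Finset (V × V)}
    (hS : ∀ H, S (M H (S H)) = S H) : Function.Involutive fun H => M H (S H) :=
  fun H => by simp only [hS, M_M]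

theorem horiz_mem_bbEdges : .horiz u v ε ∈ bbEdges Vs E ↔ (u, v) ∈ E := by
  cases ε <;> simp [bbEdges]

theorem M_subset_bbEdges (h : H ⊆ bbEdges Vs E) : M H F ⊆ bbEdges Vs E := by
  rintro (⟨u, v, ε⟩ | w) he
  · exact horiz_mem_bbEdges.2 (horiz_mem_bbEdges.1 (h (horiz_mem_M.1 he)))
  · exact h (vert_mem_M.1 he)

end Mirror

section Reachability

variable {V : Type} [DecidableEq V] {Vs : Finset V} {E : Finset (V × V)}
  {H : Finset (BBEdge V)} {a : V × Bool} {w : V} {δ : Bool}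

theorem bbReach_iff_of_vert_notMem (hs : H ⊆ bbEdges Vs E) (hw : .vert w ∉ H)
    (ha : a ≠ (w, δ)) :
    bbReach H a (w, δ) ↔ ∃ u, (u, w) ∈ E ∧ bbReach H a (u, δ) ∧ .horiz u w δ ∈ H := by
  constructor
  · intro h
    obtain h | ⟨⟨u, η⟩, hu, ⟨rfl, -, hvert⟩ | ⟨rfl, hhor⟩⟩ := h.cases_tail
    · exact absurd h.symm ha
    · exact absurd hvert hw
    · exact ⟨u, horiz_mem_bbEdges.1 (hs hhor), hu, hhor⟩
  · rintro ⟨u, -, hu, hhor⟩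
    exact hu.tail (.inr ⟨rfl, hhor⟩)

theorem bbReach_iff_of_vert_mem (hs : H ⊆ bbEdges Vs E) (hw : .vert w ∈ H) (ha : a.1 ≠ w) :
    bbReach H a (w, δ) ↔
      ∃ u, (u, w) ∈ E ∧ ∃ η, bbReach H a (u, η) ∧ .horiz u w η ∈ H := by
  constructor
  · intro h
    obtain ⟨x, hx, hxw⟩ : ∃ x : V × Bool, bbReach H a x ∧ x.1 = w := ⟨_, h, rfl⟩
    clear h
    induction hx with
    | refl => exact absurd hxw ha
    | @tail y z hy hyz ih =>
      subst hxw
      obtain ⟨hyz, -, -⟩ | ⟨-, hhor⟩ := hyz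
      · exact ih hyz
      · exact ⟨y.1, horiz_mem_bbEdges.1 (hs hhor), y.2, hy, hhor⟩
  · rintro ⟨u, -, η, hu, hhor⟩
    have hη : bbReach H a (w, η) := hu.tail (.inr ⟨rfl, hhor⟩)
    obtain rfl | hne := eq_or_ne η δ
    · exact hη
    · exact hη.tail (.inl ⟨rfl, hne, hw⟩)

end Reachability

section ExactPosts

variable {H : Finset (BBEdge ℕ)} {F : Finset (ℕ × ℕ)} {ε δ : Bool}

theorem postCond_and_exactPosts_iff : postCond T1 H ∧ exactPosts H ↔ exactPosts H :=
  and_iff_right_of_imp fun hp t ht => (hp t).2 ht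

theorem exactPosts_M (hp : exactPosts H) : exactPosts (M H F) :=
  fun w => vert_mem_M.trans (hp w)

theorem bbReach_one_iff (hs : H ⊆ s1) (hp : exactPosts H) :
    bbReach H (1, false) (1, δ) ↔ δ = false := by
  cases δ
  · exact iff_of_true .refl rfl
  · rw [bbReach_iff_of_vert_notMem hs (by simp [hp 1, T1]) (by simp)]
    simp [E1]

theorem bbReach_two_iff (hs : H ⊆ s1) (hp : exactPosts H) :
    bbReach H (1, false) (2, δ) ↔ .horiz 1 2 false ∈ H := by
  rw [bbReach_iff_of_vert_mem hs (by simp [hp 2, T1]) (by simp)]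
  simp [E1, bbReach_one_iff hs hp]

theorem bbReach_three_iff (hs : H ⊆ s1) (hp : exactPosts H) :
    bbReach H (1, false) (3, δ) ↔ .horiz 1 2 false ∈ H ∧ .horiz 2 3 δ ∈ H := by
  rw [bbReach_iff_of_vert_notMem hs (by simp [hp 3, T1]) (by simp)]
  simp [E1, bbReach_two_iff hs hp]

theorem bbReach_four_iff (hs : H ⊆ s1) (hp : exactPosts H) :
    bbReach H (1, false) (4, δ) ↔
      (δ = false ∧ .horiz 1 4 δ ∈ H) ∨ (bbReach H (1, false) (3, δ) ∧ .horiz 3 4 δ ∈ H) := by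
  rw [bbReach_iff_of_vert_notMem hs (by simp [hp 4, T1]) (by simp)]
  simp [E1, bbReach_one_iff hs hp]

theorem bbReach_five_iff (hs : H ⊆ s1) (hp : exactPosts H) :
    bbReach H (1, false) (5, δ) ↔ ∃ η, bbReach H (1, false) (4, η) ∧ .horiz 4 5 η ∈ H := by
  rw [bbReach_iff_of_vert_mem hs (by simp [hp 5, T1]) (by simp)]
  simp [E1]

theorem pev_iff (hs : H ⊆ s1) (hp : exactPosts H) :
    Pev ε H ↔ .horiz 1 2 false ∈ H ∧ .horiz 2 3 ε ∈ H ∧ .horiz 2 3 (!ε) ∉ H ∧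
      ((.horiz 1 4 false ∈ H ∧ .horiz 4 5 false ∈ H) ∨
        (.horiz 3 4 ε ∈ H ∧ .horiz 4 5 ε ∈ H)) := by
  simp only [Pev, bbReach_five_iff hs hp, bbReach_four_iff hs hp, bbReach_three_iff hs hp, or_self]
  cases ε <;> simp only [Bool.exists_bool, Bool.not_false, Bool.not_true, reduceCtorEq] <;> tauto

/-- The shadows mirrored to pass from `P₋` to `P₊`: the edge `(2,3)` alone when `1⁻ → 4⁻` is
open, and the whole path `2 → 3 → 4 → 5` otherwise. -/
def mirrorShadows (H : Finset (BBEdge ℕ)) : Finset (ℕ × ℕ) :=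
  if .horiz 1 4 false ∈ H then {(2, 3)} else {(2, 3), (3, 4), (4, 5)}

theorem mirrorShadows_M : mirrorShadows (M H (mirrorShadows H)) = mirrorShadows H := by
  by_cases h : .horiz 1 4 false ∈ H <;> simp [mirrorShadows, h, horiz_mem_M]

theorem M_mirrorShadows_involutive : Function.Involutive fun H => M H (mirrorShadows H) :=
  M_involutive_of_forall_eq fun _ => mirrorShadows_M

theorem Pev.M_mirrorShadows (hs : H ⊆ s1) (hp : exactPosts H) (h : Pev false H) :
    Pev true (M H (mirrorShadows H)) := by
  rw [pev_iff hs hp] at h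
  rw [pev_iff (M_subset_bbEdges hs) (exactPosts_M hp)]
  by_cases hc : .horiz 1 4 false ∈ H
  · have h45 : .horiz 4 5 false ∈ H := by tauto
    simpa [mirrorShadows, hc, horiz_mem_M, h45] using ⟨h.1, h.2.1, h.2.2.1⟩
  · simpa [mirrorShadows, hc, horiz_mem_M] using h

/-- A configuration in `P₊` that is not the mirror of one in `P₋`: the edge `1⁻ → 4⁻` is open
but leads nowhere, and `5` is reached in the upper bunk only. -/
def upperWitness : Finset (BBEdge ℕ) :=
  {.vert 2, .vert 5, .vert 8, .horiz 1 2 false, .horiz 1 4 false, .horiz 2 3 true,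
    .horiz 3 4 true, .horiz 4 5 true}

theorem upperWitness_subset : upperWitness ⊆ s1 := by
  decide

theorem exactPosts_upperWitness : exactPosts upperWitness := fun w => by
  simp [upperWitness, T1]

theorem pev_true_upperWitness : Pev true upperWitness := by
  rw [pev_iff upperWitness_subset exactPosts_upperWitness]
  decide

theorem not_pev_false_M_upperWitness :
    ¬ Pev false (M upperWitness (mirrorShadows upperWitness)) := by
  rw [pev_iff (M_subset_bbEdges upperWitness_subset) (exactPosts_M exactPosts_upperWitness)]
  decide

end ExactPosts

/-- in the conditioned bunkbed percolation model `𝓔_T` on `G₁` with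
`T = {2,5,8}` at `p = 1/2`, conditioned additionally on the post set being exactly
`{2,5,8}`, the conditional probability of `P₊` strictly exceeds that of `P₋`. -/
theorem Pplus_beats_Pminus :
    CondPr s1 (fun H => postCond T1 H ∧ exactPosts H) (Pev false) <
      CondPr s1 (fun H => postCond T1 H ∧ exactPosts H) (Pev true) := by
  simp only [postCond_and_exactPosts_iff]
  refine condPr_lt_condPr (pr_lt_pr_of_injOn (f := fun H => M H (mirrorShadows H)) ?_
    M_mirrorShadows_involutive.injective.injOn fun hsurj => ?_)
  · rintro H ⟨hs, hP, hp⟩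
    exact ⟨M_subset_bbEdges hs, hP.M_mirrorShadows hs hp, exactPosts_M hp⟩
  · obtain ⟨H, ⟨-, hP, -⟩, hH⟩ :=
      hsurj ⟨upperWitness_subset, pev_true_upperWitness, exactPosts_upperWitness⟩
    have hHK : H = M upperWitness (mirrorShadows upperWitness) :=
      M_mirrorShadows_involutive.eq_iff.1 hH
    exact not_pev_false_M_upperWitness (hHK ▸ hP)
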